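/- arXiv:1805.08346 — 3 statements merged into one kernel-verified Lean document; each statement's English description precedes it below -/
import Mathlib

section
/- Let (X,π) and (Y,σ) be semidynamical systems on metric spaces, x ∈ X, y ∈ Y, and let A ⊆ X be positively invariant with L⁺(x) ∩ A ≠ ∅. If y is comparable with x with respect to the set L⁺(x) ∩ A, then there exists a continuous map h : L⁺(x) ∩ A → L⁺(y) such that 𝓛_{x,q}^∞ ⊆ 𝓛_{y,h(q)}^∞ for every q ∈ L⁺(x) ∩ A, and h(π(q,t)) = σ(h(q),t) for every q ∈ L⁺(x) ∩ A and every t ≥ 0. -/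
/-!
Consider the filter of times `t → ∞` at which `π x t` approaches `q`. Two sequences tending to it
can be interleaved into a third one, so comparability forces `σ y` to converge along the whole
filter, and `h q` is the limit. A set belonging to the filter of `q` belongs to the filters of all
points near `q`, so regularity of `Y` makes `h` continuous. Shifting time by `s` maps the filter
of `q` to the filter of `π q s`, which gives equivariance.
-/

open Filter Topology
open scoped NNReal

/-- `π` is a semidynamical system on the metric space `Z`. -/
def IsSDS {Z : Type*} [MetricSpace Z] (π : Z → ℝ≥0 → Z) : Prop :=
  Continuous (fun p : Z × ℝ≥0 => π p.1 p.2) ∧ (∀ z, π z 0 = z) ∧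
    ∀ z t s, π (π z t) s = π z (t + s)

/-- The positive limit set of a point `x` under `π`. -/
def limitSet {Z : Type*} [MetricSpace Z] (π : Z → ℝ≥0 → Z) (x : Z) : Set Z :=
  {p | ∃ t : ℕ → ℝ≥0, Tendsto t atTop atTop ∧
    Tendsto (fun n => π x (t n)) atTop (𝓝 p)}

section Interleaving

variable {α Y : Type*} {F : Filter α}

lemma exists_seq_interleave_tendsto {a b : ℕ → α} (ha : Tendsto a atTop F)
    (hb : Tendsto b atTop F) :
    ∃ c : ℕ → α, Tendsto c atTop F ∧ (∀ n, c (2 * n) = a n) ∧ ∀ n, c (2 * n + 1) = b n := by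
  have hdiv : Tendsto (fun n : ℕ => n / 2) atTop atTop :=
    Nat.tendsto_div_const_atTop two_ne_zero
  refine ⟨fun n => if Even n then a (n / 2) else b (n / 2),
    (ha.comp hdiv).if' (hb.comp hdiv), fun n => by simp, fun n => ?_⟩
  have hn : (2 * n + 1) / 2 = n := by lia
  simp [hn]

lemma exists_tendsto_of_forall_seq_exists_tendsto [TopologicalSpace Y] [T2Space Y]
    [F.IsCountablyGenerated] [F.NeBot] {g : α → Y}
    (hg : ∀ t : ℕ → α, Tendsto t atTop F → ∃ p, Tendsto (fun n => g (t n)) atTop (𝓝 p)) :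
    ∃ p, Tendsto g F (𝓝 p) := by
  obtain ⟨a, ha⟩ := exists_seq_tendsto F
  obtain ⟨p, hp⟩ := hg a ha
  refine ⟨p, tendsto_of_seq_tendsto fun b hb => ?_⟩
  obtain ⟨c, hc, hca, hcb⟩ := exists_seq_interleave_tendsto ha hb
  obtain ⟨r, hr⟩ := hg c hc
  have heven : Tendsto (fun n : ℕ => 2 * n) atTop atTop :=
    tendsto_id.const_mul_atTop' two_pos
  have hodd : Tendsto (fun n : ℕ => 2 * n + 1) atTop atTop :=
    (tendsto_add_atTop_nat 1).comp heven
  have har : Tendsto (fun n => g (a n)) atTop (𝓝 r) := by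
    simpa only [Function.comp_def, hca] using hr.comp heven
  have hbr : Tendsto (g ∘ b) atTop (𝓝 r) := by
    simpa only [Function.comp_def, hcb] using hr.comp hodd
  rwa [tendsto_nhds_unique hp har]

end Interleaving

section ApproachFilter

variable {T X Y : Type*} [TopologicalSpace X] [TopologicalSpace Y] {l : Filter T} {f : T → X}
  {g : T → Y}

/-- The filter of times `t`, going to infinity in the sense of `l`, at which `f t` approaches `q`.
For `l = atTop` and `f = π x`, the sequences in `𝓛_{x,q}^∞` are those tending to this filter. -/
def approachFilter (l : Filter T) (f : T → X) (q : X) : Filter T :=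
  l ⊓ comap f (𝓝 q)

instance [l.IsCountablyGenerated] [FirstCountableTopology X] (q : X) :
    (approachFilter l f q).IsCountablyGenerated :=
  inferInstanceAs (l ⊓ comap f (𝓝 q)).IsCountablyGenerated

lemma tendsto_approachFilter_iff {ι : Type*} {k : Filter ι} {t : ι → T} {q : X} :
    Tendsto t k (approachFilter l f q) ↔
      Tendsto t k l ∧ Tendsto (fun i => f (t i)) k (𝓝 q) := by
  simp only [approachFilter, tendsto_inf, tendsto_comap_iff, Function.comp_def]

lemma approachFilter_neBot_iff {q : X} : (approachFilter l f q).NeBot ↔ MapClusterPt q l f := by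
  rw [approachFilter, neBot_inf_comap_iff_map, inf_comm, mapClusterPt_def, ClusterPt]

lemma eventually_eventually_approachFilter {P : T → Prop} {q : X}
    (hP : ∀ᶠ t in approachFilter l f q, P t) :
    ∀ᶠ q' in 𝓝 q, ∀ᶠ t in approachFilter l f q', P t := by
  obtain ⟨⟨S, U⟩, ⟨hS, hqU, hU⟩, hSU⟩ :=
    (l.basis_sets.inf ((nhds_basis_opens q).comap f)).eventually_iff.1 hP
  filter_upwards [hU.mem_nhds hqU] with q' hq'U
  have hmem : S ∩ f ⁻¹' U ∈ approachFilter l f q' :=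
    inter_mem_inf hS (preimage_mem_comap (hU.mem_nhds hq'U))
  exact mem_of_superset hmem fun _ ht => hSU ht

lemma mapClusterPt_of_semiconj {φ : T → T} {P : X → X} {q : X} (hq : MapClusterPt q l f)
    (hφ : Tendsto φ l l) (hP : ContinuousAt P q) (hf : Function.Semiconj f φ P) :
    MapClusterPt (P q) l f :=
  .of_comp hφ (hf.comp_eq ▸ hq.continuousAt_comp hP)

lemma tendsto_approachFilter_of_semiconj {φ : T → T} {P : X → X} {q : X}
    (hφ : Tendsto φ l l) (hP : ContinuousAt P q) (hf : Function.Semiconj f φ P) :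
    Tendsto φ (approachFilter l f q) (approachFilter l f (P q)) := by
  obtain ⟨hl, hq⟩ := tendsto_approachFilter_iff.1 (tendsto_id (x := approachFilter l f q))
  refine tendsto_approachFilter_iff.2 ⟨hφ.comp hl, ?_⟩
  simpa only [Function.comp_def, id, hf.eq] using hP.tendsto.comp hq

lemma continuousOn_of_tendsto_approachFilter [RegularSpace Y]
    {h : X → Y} {S : Set X} (hS : ∀ q ∈ S, MapClusterPt q l f)
    (hg : ∀ q ∈ S, Tendsto g (approachFilter l f q) (𝓝 (h q))) : ContinuousOn h S := by
  intro q hq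
  refine (closed_nhds_basis (h q)).tendsto_right_iff.2 fun V ⟨hV, hV_closed⟩ => ?_
  have hgV : ∀ᶠ t in approachFilter l f q, g t ∈ V := hg q hq hV
  filter_upwards [self_mem_nhdsWithin,
    mem_nhdsWithin_of_mem_nhds (eventually_eventually_approachFilter hgV)] with q' hq' hgV'
  have := approachFilter_neBot_iff.2 (hS q' hq')
  exact hV_closed.mem_of_tendsto (hg q' hq') hgV'

lemma eq_of_tendsto_approachFilter_of_semiconj [T2Space Y] {φ : T → T} {P : X → X} {Q : Y → Y}
    {q : X} {a b : Y} (hq : MapClusterPt q l f) (hφ : Tendsto φ l l) (hP : ContinuousAt P q)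
    (hf : Function.Semiconj f φ P) (hQ : ContinuousAt Q a) (hg : Function.Semiconj g φ Q)
    (ha : Tendsto g (approachFilter l f q) (𝓝 a))
    (hb : Tendsto g (approachFilter l f (P q)) (𝓝 b)) : b = Q a := by
  have := approachFilter_neBot_iff.2 hq
  have hb' : Tendsto (g ∘ φ) (approachFilter l f q) (𝓝 b) :=
    hb.comp (tendsto_approachFilter_of_semiconj hφ hP hf)
  have ha' : Tendsto (Q ∘ g) (approachFilter l f q) (𝓝 (Q a)) := hQ.tendsto.comp ha
  rw [hg.comp_eq] at hb'
  exact tendsto_nhds_unique hb' ha'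

end ApproachFilter

lemma limitSet_eq_setOf_mapClusterPt {Z : Type*} [MetricSpace Z] (π : Z → ℝ≥0 → Z) (x : Z) :
    limitSet π x = {p | MapClusterPt p atTop (π x)} := by
  ext p
  refine ⟨fun ⟨t, ht, htp⟩ => htp.mapClusterPt.of_comp ht, fun hp => ?_⟩
  obtain ⟨t, htp, ht⟩ := hp.exists_seq_tendsto
  exact ⟨t, ht, htp⟩

theorem stmt_2_general {T X Y : Type*} [Preorder T] [Add T] [CanonicallyOrderedAdd T]
    [(atTop : Filter T).IsCountablyGenerated] [TopologicalSpace X] [FirstCountableTopology X]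
    [TopologicalSpace Y] [T3Space Y] {π : X → T → X} {σ : Y → T → Y}
    (hπ : ∀ s, Continuous fun z => π z s) (hπ_add : ∀ z t s, π (π z t) s = π z (t + s))
    (hσ : ∀ s, Continuous fun z => σ z s) (hσ_add : ∀ z t s, σ (σ z t) s = σ z (t + s))
    (x : X) (y : Y) {A : Set X} (hA : ∀ a ∈ A, ∀ t, π a t ∈ A)
    (hcomp : ∀ t : ℕ → T, Tendsto t atTop atTop →
      (∃ p ∈ {p | MapClusterPt p atTop (π x)} ∩ A, Tendsto (fun n => π x (t n)) atTop (𝓝 p)) →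
      ∃ q, Tendsto (fun n => σ y (t n)) atTop (𝓝 q)) :
    ∃ h : X → Y, ContinuousOn h ({p | MapClusterPt p atTop (π x)} ∩ A) ∧
      Set.MapsTo h ({p | MapClusterPt p atTop (π x)} ∩ A) {p | MapClusterPt p atTop (σ y)} ∧
      (∀ q ∈ {p | MapClusterPt p atTop (π x)} ∩ A, ∀ t : ℕ → T, Tendsto t atTop atTop →
        Tendsto (fun n => π x (t n)) atTop (𝓝 q) →
        Tendsto (fun n => σ y (t n)) atTop (𝓝 (h q))) ∧
      (∀ q ∈ {p | MapClusterPt p atTop (π x)} ∩ A, ∀ s, h (π q s) = σ (h q) s) := by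
  set S := {p | MapClusterPt p atTop (π x)} ∩ A
  have hlim : ∀ q ∈ S, ∃ p, Tendsto (σ y) (approachFilter atTop (π x) q) (𝓝 p) := by
    intro q hq
    have := approachFilter_neBot_iff.2 hq.1
    refine exists_tendsto_of_forall_seq_exists_tendsto fun t ht => ?_
    obtain ⟨ht, htq⟩ := tendsto_approachFilter_iff.1 ht
    exact hcomp t ht ⟨q, hq, htq⟩
  have : Nonempty Y := ⟨y⟩
  choose! h hh using hlim
  refine ⟨h, continuousOn_of_tendsto_approachFilter (fun q hq => hq.1) hh, fun q hq => ?_,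
    fun q hq t ht htq => (hh q hq).comp (tendsto_approachFilter_iff.2 ⟨ht, htq⟩),
    fun q hq s => ?_⟩
  · have := approachFilter_neBot_iff.2 hq.1
    exact (hh q hq).mapClusterPt.mono inf_le_left
  · have hshift : Tendsto (· + s) (atTop : Filter T) atTop :=
      tendsto_atTop_mono (fun _ => le_self_add) tendsto_id
    have hπx : Function.Semiconj (π x) (· + s) (π · s) := fun t => (hπ_add x t s).symm
    have hσy : Function.Semiconj (σ y) (· + s) (σ · s) := fun t => (hσ_add y t s).symm
    have hqs : π q s ∈ S :=
      ⟨mapClusterPt_of_semiconj hq.1 hshift (hπ s).continuousAt hπx, hA q hq.2 s⟩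
    exact eq_of_tendsto_approachFilter_of_semiconj hq.1 hshift (hπ s).continuousAt hπx
      (hσ s).continuousAt hσy (hh q hq) (hh _ hqs)

theorem stmt_2 {X Y : Type*} [MetricSpace X] [MetricSpace Y]
    (π : X → ℝ≥0 → X) (σ : Y → ℝ≥0 → Y) (hπ : IsSDS π) (hσ : IsSDS σ)
    (x : X) (y : Y) (A : Set X)
    (hA : ∀ a ∈ A, ∀ t : ℝ≥0, π a t ∈ A)
    (hne : (limitSet π x ∩ A).Nonempty)
    (hcomp : ∀ t : ℕ → ℝ≥0, Tendsto t atTop atTop →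
      (∃ p ∈ limitSet π x ∩ A, Tendsto (fun n => π x (t n)) atTop (𝓝 p)) →
      ∃ q : Y, Tendsto (fun n => σ y (t n)) atTop (𝓝 q)) :
    ∃ h : X → Y, ContinuousOn h (limitSet π x ∩ A) ∧
      Set.MapsTo h (limitSet π x ∩ A) (limitSet σ y) ∧
      (∀ q ∈ limitSet π x ∩ A, ∀ t : ℕ → ℝ≥0, Tendsto t atTop atTop →
        Tendsto (fun n => π x (t n)) atTop (𝓝 q) →
        Tendsto (fun n => σ y (t n)) atTop (𝓝 (h q))) ∧
      (∀ q ∈ limitSet π x ∩ A, ∀ s : ℝ≥0, h (π q s) = σ (h q) s) := by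
  simp only [limitSet_eq_setOf_mapClusterPt] at hcomp ⊢
  exact stmt_2_general (fun s => hπ.1.comp (.prodMk_left s)) hπ.2.2
    (fun s => hσ.1.comp (.prodMk_left s)) hσ.2.2 x y hA hcomp
end

section
/- Let (X,π) and (Y,σ) be semidynamical systems on metric spaces with X a complete metric space, and let x ∈ X be asymptotically almost periodic. If y ∈ Y is comparable in limit with x, then y is asymptotically almost periodic (with respect to σ). -/
/-!
Let `x` track the almost periodic point `p` along the time change `g`. Almost periodicity makes the
orbit of `p` totally bounded, so its closure `K` is compact, and recurrent, so every point of `K` is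
a cluster point of `π x t` as `t → ∞`. Comparability in limit yields a map
`lim π x tₙ ↦ lim σ y tₙ`, well defined because two sequences of times with the same limit can be
interlaced. This map `h` is automatically continuous on `K`, hence uniformly continuous there, and
it intertwines the two semidynamical systems. Therefore `h p` is almost periodic and `y` tracks
`h p` along the same `g`.
-/

open Filter Topology
open scoped NNReal

/-- `x` is an almost periodic point of the semidynamical system `π`. -/
def AlmostPer {Z : Type*} [MetricSpace Z] (π : Z → ℝ≥0 → Z) (x : Z) : Prop :=
  ∀ ε : ℝ, 0 < ε → ∃ T : ℝ≥0, 0 < T ∧ ∀ α : ℝ≥0, ∃ τ : ℝ≥0,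
    α ≤ τ ∧ τ ≤ α + T ∧ 0 < τ ∧ ∀ t : ℝ≥0, dist (π x (t + τ)) (π x t) < ε

/-- The set `P_x`: points `z ∈ L⁺(x) ∩ L⁺(z)` whose motion tracks that of `x` up to a
time reparametrization (a homeomorphism `g` of `[0,∞)` with `g 0 = 0`). -/
def Pset {Z : Type*} [MetricSpace Z] (π : Z → ℝ≥0 → Z) (x : Z) : Set Z :=
  {z | z ∈ limitSet π x ∧ z ∈ limitSet π z ∧
    ∃ g : ℝ≥0 ≃ₜ ℝ≥0, g 0 = 0 ∧
      Tendsto (fun t : ℝ≥0 => dist (π x t) (π z (g t))) atTop (𝓝 0)}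

/-- `x` is asymptotically almost periodic: its motion tracks that of an almost periodic
point up to a time reparametrization. -/
def AsympAP {Z : Type*} [MetricSpace Z] (π : Z → ℝ≥0 → Z) (x : Z) : Prop :=
  ∃ p : Z, AlmostPer π p ∧ ∃ g : ℝ≥0 ≃ₜ ℝ≥0, g 0 = 0 ∧
    Tendsto (fun t : ℝ≥0 => dist (π x t) (π p (g t))) atTop (𝓝 0)

open scoped Uniformity

section SequentialLimits

variable {α Y : Type*} [TopologicalSpace Y] [T2Space Y] {l : Filter α} {f : α → Y}

lemma tendsto_nhds_unique_of_forall_seq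
    (hf : ∀ u : ℕ → α, Tendsto u atTop l → ∃ c, Tendsto (fun n => f (u n)) atTop (𝓝 c))
    {u v : ℕ → α} (hu : Tendsto u atTop l) (hv : Tendsto v atTop l) {a b : Y}
    (ha : Tendsto (fun n => f (u n)) atTop (𝓝 a)) (hb : Tendsto (fun n => f (v n)) atTop (𝓝 b)) :
    a = b := by
  have half : Tendsto (fun n : ℕ => n / 2) atTop atTop := Nat.tendsto_div_const_atTop two_ne_zero
  have even : Tendsto (fun n : ℕ => 2 * n) atTop atTop := tendsto_id.const_mul_atTop' two_pos
  have odd : Tendsto (fun n : ℕ => 2 * n + 1) atTop atTop :=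
    tendsto_atTop_mono (fun n => Nat.le_succ _) even
  obtain ⟨c, hc⟩ := hf (fun n => if Even n then u (n / 2) else v (n / 2))
    (Tendsto.if' (hu.comp half) (hv.comp half))
  have hac : a = c := tendsto_nhds_unique ha ((hc.comp even).congr fun n => by simp)
  have hbc : b = c := by
    refine tendsto_nhds_unique hb ((hc.comp odd).congr fun n => ?_)
    have : (2 * n + 1) / 2 = n := by lia
    simp [this]
  exact hac.trans hbc.symm

lemma exists_tendsto_of_forall_seq [Nonempty Y] [l.IsCountablyGenerated]
    (hf : ∀ u : ℕ → α, Tendsto u atTop l → ∃ c, Tendsto (fun n => f (u n)) atTop (𝓝 c)) :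
    ∃ c, Tendsto f l (𝓝 c) := by
  rcases l.eq_or_neBot with rfl | _
  · exact ⟨Classical.arbitrary Y, tendsto_bot⟩
  obtain ⟨u, hu⟩ := exists_seq_tendsto l
  obtain ⟨c, hc⟩ := hf u hu
  refine ⟨c, tendsto_of_seq_tendsto fun v hv => ?_⟩
  obtain ⟨d, hd⟩ := hf v hv
  rwa [tendsto_nhds_unique_of_forall_seq hf hu hv hc hd]

end SequentialLimits

lemma mapClusterPt_congr_uniformity {α X : Type*} [UniformSpace X] {l : Filter α} {φ φ' : α → X}
    {q : X} (h : Tendsto (fun t => (φ t, φ' t)) l (𝓤 X)) :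
    MapClusterPt q l φ ↔ MapClusterPt q l φ' := by
  simp only [mapClusterPt_iff_ultrafilter]
  exact exists_congr fun U => and_congr_right fun hU => Uniform.tendsto_congr (h.mono_left hU)

/-- `h` is a limit map from `φ` to `ψ` along `l`: whenever `φ` tends to `q` along a filter finer
than `l`, `ψ` tends to `h q` along it. The value of `h` is only determined at the cluster points of
`φ` along `l`; elsewhere the filter below is `⊥`. -/
def IsLimitMap {α X Y : Type*} [TopologicalSpace X] [TopologicalSpace Y] (l : Filter α)
    (φ : α → X) (ψ : α → Y) (h : X → Y) : Prop :=
  ∀ q, Tendsto ψ (l ⊓ comap φ (𝓝 q)) (𝓝 (h q))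

lemma exists_isLimitMap {α X Y : Type*} [TopologicalSpace X] [FirstCountableTopology X]
    [TopologicalSpace Y] [T2Space Y] [Nonempty Y] {l : Filter α} [l.IsCountablyGenerated]
    {φ : α → X} {ψ : α → Y}
    (hcomp : ∀ t : ℕ → α, Tendsto t atTop l → (∃ p, Tendsto (fun n => φ (t n)) atTop (𝓝 p)) →
      ∃ q, Tendsto (fun n => ψ (t n)) atTop (𝓝 q)) :
    ∃ h, IsLimitMap l φ ψ h := by
  refine Classical.skolem.1 fun q => exists_tendsto_of_forall_seq fun t ht => ?_
  obtain ⟨htl, htq⟩ := tendsto_inf.1 ht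
  exact hcomp t htl ⟨q, tendsto_comap_iff.1 htq⟩

namespace IsLimitMap

section Topological

variable {α X Y : Type*} [TopologicalSpace X] [TopologicalSpace Y] {l : Filter α}
  {φ : α → X} {ψ : α → Y} {h : X → Y}

lemma tendsto_comp (hh : IsLimitMap l φ ψ h) {β : Type*} {k : Filter β} {t : β → α} {q : X}
    (ht : Tendsto t k l) (hq : Tendsto (fun b => φ (t b)) k (𝓝 q)) :
    Tendsto (fun b => ψ (t b)) k (𝓝 (h q)) :=
  (hh q).comp (tendsto_inf.2 ⟨ht, tendsto_comap_iff.2 hq⟩)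

lemma continuousOn [RegularSpace Y] (hh : IsLimitMap l φ ψ h) {K : Set X}
    (hK : ∀ q ∈ K, MapClusterPt q l φ) : ContinuousOn h K := by
  intro q _
  refine (closed_nhds_basis (h q)).tendsto_right_iff.2 fun V ⟨hV, hVc⟩ => ?_
  obtain ⟨⟨A, U⟩, ⟨hA, hqU, hU⟩, hAU⟩ :=
    ((l.basis_sets.inf ((nhds_basis_opens q).comap φ)).eventually_iff).1 (hh q hV)
  filter_upwards [inter_mem_nhdsWithin K (hU.mem_nhds hqU)] with q' ⟨hq'K, hq'U⟩
  obtain ⟨F, hFl, hF⟩ := mapClusterPt_iff_ultrafilter.1 (hK q' hq'K)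
  refine hVc.mem_of_tendsto (hh.tendsto_comp hFl hF) ?_
  filter_upwards [hFl hA, hF (hU.mem_nhds hq'U)] with t htA htU using hAU ⟨htA, htU⟩

lemma apply_eq_of_semiconj [T2Space Y] (hh : IsLimitMap l φ ψ h) {s : α → α} {f : X → X}
    {g : Y → Y} (hs : Tendsto s l l) (hφ : Function.Semiconj φ s f) (hψ : Function.Semiconj ψ s g)
    {q : X} (hq : MapClusterPt q l φ) (hf : ContinuousAt f q) (hg : ContinuousAt g (h q)) :
    h (f q) = g (h q) := by
  obtain ⟨F, hFl, hF⟩ := mapClusterPt_iff_ultrafilter.1 hq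
  have hφs : Tendsto (fun t => φ (s t)) F (𝓝 (f q)) :=
    (hf.tendsto.comp hF).congr fun t => (hφ t).symm
  have hψs : Tendsto (fun t => ψ (s t)) F (𝓝 (g (h q))) :=
    (hg.tendsto.comp (hh.tendsto_comp hFl hF)).congr fun t => (hψ t).symm
  exact tendsto_nhds_unique (hh.tendsto_comp (hs.mono_left hFl) hφs) hψs

end Topological

lemma tendsto_uniformity {α X Y : Type*} [UniformSpace X] [UniformSpace Y] {l : Filter α}
    {φ φ' : α → X} {ψ : α → Y} {h : X → Y} (hh : IsLimitMap l φ ψ h) {K : Set X}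
    (hK : IsCompact K) (hcont : ContinuousOn h K) (hφ' : ∀ᶠ t in l, φ' t ∈ K)
    (htrack : Tendsto (fun t => (φ t, φ' t)) l (𝓤 X)) :
    Tendsto (fun t => (ψ t, h (φ' t))) l (𝓤 Y) := by
  refine (tendsto_iff_ultrafilter _ _ _).2 fun F hFl => ?_
  obtain ⟨q, hqK, hq⟩ := hK.ultrafilter_le_nhds' (F.map φ') (hFl hφ')
  have hψ : Tendsto ψ F (𝓝 (h q)) :=
    hh.tendsto_comp hFl ((Uniform.tendsto_congr (htrack.mono_left hFl)).2 hq)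
  have hhφ' : Tendsto (fun t => h (φ' t)) F (𝓝 (h q)) :=
    (hcont q hqK).tendsto.comp (tendsto_nhdsWithin_iff.2 ⟨hq, hFl hφ'⟩)
  exact (hψ.prodMk_nhds hhφ').mono_right (nhds_le_uniformity _)

end IsLimitMap

lemma totallyBounded_of_forall_exists_dist_lt {X : Type*} [PseudoMetricSpace X] {s : Set X}
    (h : ∀ ε > 0, ∃ t, TotallyBounded t ∧ ∀ x ∈ s, ∃ y ∈ t, dist x y < ε) : TotallyBounded s := by
  refine Metric.totallyBounded_iff.2 fun ε hε => ?_
  obtain ⟨t, ht, hst⟩ := h (ε / 2) (half_pos hε)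
  obtain ⟨c, hc, htc⟩ := Metric.totallyBounded_iff.1 ht (ε / 2) (half_pos hε)
  refine ⟨c, hc, fun x hx => ?_⟩
  obtain ⟨y, hy, hxy⟩ := hst x hx
  obtain ⟨z, hz, hyz⟩ := Set.mem_iUnion₂.1 (htc hy)
  refine Set.mem_iUnion₂.2 ⟨z, hz, ?_⟩
  calc dist x z ≤ dist x y + dist y z := dist_triangle x y z
    _ < ε / 2 + ε / 2 := add_lt_add hxy hyz
    _ = ε := add_halves ε

namespace IsSDS

variable {X : Type*} [MetricSpace X] {π : X → ℝ≥0 → X}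

lemma continuous_motion (hπ : IsSDS π) (x : X) : Continuous (π x) :=
  hπ.1.comp (Continuous.prodMk_right x)

lemma continuous_flow_map (hπ : IsSDS π) (t : ℝ≥0) : Continuous fun x => π x t :=
  hπ.1.comp (Continuous.prodMk_left t)

lemma semiconj_motion (hπ : IsSDS π) (x : X) (s : ℝ≥0) :
    Function.Semiconj (π x) (· + s) fun z => π z s :=
  fun t => (hπ.2.2 x t s).symm

end IsSDS

lemma IsLimitMap.apply_motion {X Y : Type*} [MetricSpace X] [MetricSpace Y] {π : X → ℝ≥0 → X}
    {σ : Y → ℝ≥0 → Y} (hπ : IsSDS π) (hσ : IsSDS σ) {x : X} {y : Y} {h : X → Y}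
    (hh : IsLimitMap atTop (π x) (σ y) h) {q : X} (hq : MapClusterPt q atTop (π x)) (s : ℝ≥0) :
    h (π q s) = σ (h q) s :=
  hh.apply_eq_of_semiconj (tendsto_atTop_mono (fun _ => le_self_add) tendsto_id)
    (hπ.semiconj_motion x s) (hσ.semiconj_motion y s) hq
    (hπ.continuous_flow_map s).continuousAt (hσ.continuous_flow_map s).continuousAt

namespace AlmostPer

variable {X : Type*} [MetricSpace X] {π : X → ℝ≥0 → X} {p : X}

lemma exists_forall_dist_lt (hp : AlmostPer π p) {ε : ℝ} (hε : 0 < ε) :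
    ∃ T, ∀ t, ∃ s ≤ T, dist (π p t) (π p s) < ε := by
  obtain ⟨T, -, hT⟩ := hp ε hε
  refine ⟨T, fun t => ?_⟩
  rcases le_total t T with htT | hTt
  · exact ⟨t, htT, by simpa using hε⟩
  · obtain ⟨τ, hτ, hτt, -, hd⟩ := hT (t - T)
    rw [tsub_add_cancel_of_le hTt] at hτt
    refine ⟨t - τ, tsub_le_iff_tsub_le.1 hτ, ?_⟩
    simpa only [tsub_add_cancel_of_le hτt] using hd (t - τ)

lemma totallyBounded_range (hp : AlmostPer π p) (hcont : Continuous (π p)) :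
    TotallyBounded (Set.range (π p)) := by
  refine totallyBounded_of_forall_exists_dist_lt fun ε hε => ?_
  obtain ⟨T, hT⟩ := hp.exists_forall_dist_lt hε
  refine ⟨π p '' Set.Icc 0 T, (isCompact_Icc.image hcont).totallyBounded, ?_⟩
  rintro _ ⟨t, rfl⟩
  obtain ⟨s, hsT, hs⟩ := hT t
  exact ⟨π p s, ⟨s, ⟨zero_le, hsT⟩, rfl⟩, hs⟩

lemma isCompact_closure_range [CompleteSpace X] (hp : AlmostPer π p) (hcont : Continuous (π p)) :
    IsCompact (closure (Set.range (π p))) :=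
  (hp.totallyBounded_range hcont).closure.isCompact_of_isClosed isClosed_closure

lemma mapClusterPt_motion (hp : AlmostPer π p) (s : ℝ≥0) : MapClusterPt (π p s) atTop (π p) := by
  refine Metric.nhds_basis_ball.mapClusterPt_iff_frequently.2 fun ε hε =>
    frequently_atTop.2 fun α => ?_
  obtain ⟨T, -, hT⟩ := hp ε hε
  obtain ⟨τ, hτ, -, -, hd⟩ := hT α
  exact ⟨s + τ, hτ.trans le_add_self, hd s⟩

lemma mapClusterPt_of_mem_closure (hp : AlmostPer π p) {q : X}
    (hq : q ∈ closure (Set.range (π p))) : MapClusterPt q atTop (π p) := by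
  have hclosed : IsClosed {q | MapClusterPt q atTop (π p)} := isClosed_setOfPred_clusterPt
  have hrange : Set.range (π p) ⊆ {q | MapClusterPt q atTop (π p)} :=
    Set.range_subset_iff.2 hp.mapClusterPt_motion
  exact closure_minimal hrange hclosed hq

lemma of_uniformContinuousOn {Y : Type*} [MetricSpace Y] {σ : Y → ℝ≥0 → Y} {h : X → Y} {r : Y}
    (hp : AlmostPer π p) (hh : UniformContinuousOn h (Set.range (π p)))
    (hr : ∀ t, h (π p t) = σ r t) : AlmostPer σ r := by
  intro ε hε
  obtain ⟨δ, hδ, hhδ⟩ := Metric.uniformContinuousOn_iff.1 hh ε hε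
  obtain ⟨T, hT0, hT⟩ := hp δ hδ
  refine ⟨T, hT0, fun α => ?_⟩
  obtain ⟨τ, hατ, hτT, hτ0, hd⟩ := hT α
  refine ⟨τ, hατ, hτT, hτ0, fun t => ?_⟩
  simpa only [hr] using hhδ _ (Set.mem_range_self _) _ (Set.mem_range_self _) (hd t)

lemma mapClusterPt_of_tracking (hp : AlmostPer π p) (g : ℝ≥0 ≃ₜ ℝ≥0) {φ : ℝ≥0 → X}
    (hφ : Tendsto (fun t => (φ t, π p (g t))) atTop (𝓤 X)) {q : X}
    (hq : q ∈ closure (Set.range (π p))) : MapClusterPt q atTop φ := by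
  have hg : Tendsto g.symm atTop atTop := by
    simpa only [cocompact_eq_atTop] using g.symm.isClosedEmbedding.tendsto_cocompact
  have hpg : MapClusterPt q atTop (π p ∘ g) := by
    refine MapClusterPt.of_comp hg ?_
    simpa only [Function.comp_assoc, g.self_comp_symm, Function.comp_id]
      using hp.mapClusterPt_of_mem_closure hq
  exact (mapClusterPt_congr_uniformity hφ).2 hpg

end AlmostPer

theorem stmt_13 {X Y : Type*} [MetricSpace X] [MetricSpace Y] [CompleteSpace X]
    (π : X → ℝ≥0 → X) (σ : Y → ℝ≥0 → Y) (hπ : IsSDS π) (hσ : IsSDS σ)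
    (x : X) (y : Y) (hx : AsympAP π x)
    (hcomp : ∀ t : ℕ → ℝ≥0, Tendsto t atTop atTop →
      (∃ p : X, Tendsto (fun n => π x (t n)) atTop (𝓝 p)) →
      ∃ q : Y, Tendsto (fun n => σ y (t n)) atTop (𝓝 q)) :
    AsympAP σ y := by
  obtain ⟨p, hp, g, hg0, hg⟩ := hx
  have : Nonempty Y := ⟨y⟩
  set K := closure (Set.range (π p))
  have hpK : ∀ t, π p t ∈ K := fun t => subset_closure (Set.mem_range_self t)
  have hK : IsCompact K := hp.isCompact_closure_range (hπ.continuous_motion p)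
  have htrack : Tendsto (fun t => (π x t, π p (g t))) atTop (𝓤 X) :=
    tendsto_uniformity_iff_dist_tendsto_zero.2 hg
  have hcluster : ∀ q ∈ K, MapClusterPt q atTop (π x) :=
    fun q => hp.mapClusterPt_of_tracking g htrack
  obtain ⟨h, hh⟩ := exists_isLimitMap hcomp
  have hcont : ContinuousOn h K := hh.continuousOn hcluster
  have hflow : ∀ s, h (π p s) = σ (h p) s :=
    hh.apply_motion hπ hσ (hcluster p (by simpa only [hπ.2.1] using hpK 0))
  have hhp : AlmostPer σ (h p) := hp.of_uniformContinuousOn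
    ((hK.uniformContinuousOn_of_continuous hcont).mono subset_closure) hflow
  have htrack_y : Tendsto (fun t => (σ y t, σ (h p) (g t))) atTop (𝓤 Y) := by
    simpa only [hflow] using
      hh.tendsto_uniformity hK hcont (Eventually.of_forall fun t => hpK (g t)) htrack
  exact ⟨h p, hhp, g, hg0, tendsto_uniformity_iff_dist_tendsto_zero.1 htrack_y⟩
end

section
/- Let (X,π) and (Y,σ) be semidynamical systems on metric spaces with Y a complete metric space, and let h : X → Y be a homomorphism, i.e. h is continuous and h(π(z,t)) = σ(h(z),t) for all z ∈ X and t ≥ 0. Let y ∈ Y be asymptotically almost periodic (with respect to σ), and let x ∈ X satisfy h(x) = y and have cl(π⁺(x)) compact. Assume that for each point q ∈ L⁺(y) there is a unique p ∈ X with h(p) = q. Then x is asymptotically almost periodic (with respect to π). -/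
open Filter Topology
open scoped NNReal

/-!
If `p` is almost periodic and the motion of `h x` tracks that of `p`, then recurrence puts `p` in
`L⁺(h x)`, and compactness lifts it to a point `q ∈ L⁺(x)` over `p`. The motion of `q` stays in the
compact set `L⁺(x)`, on which `h` is injective, hence uniformly invertible; so `q` inherits the
almost periodicity of `p`. The motion of `x` need not enter `L⁺(x)`, but its cluster points at
infinity lie there, and by compactness this is enough for the tracking downstairs to lift, with the
same reparametrization, to a tracking of `q` by `x`.
-/

section Compactness

open scoped Uniformity

lemma tendsto_uniformity_of_injOn_mapClusterPt {ι α β : Type*} [UniformSpace α] [UniformSpace β]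
    [T0Space β] {K : Set α} {f : α → β} {l : Filter ι} {u v : ι → α} (hK : IsCompact K)
    (hf : ContinuousOn f K) (hu : ∀ᶠ i in l, u i ∈ K) (hv : ∀ᶠ i in l, v i ∈ K)
    (hinj : ∀ a ∈ K, ∀ b ∈ K, MapClusterPt a l u → MapClusterPt b l v → f a = f b → a = b)
    (huv : Tendsto (fun i => (f (u i), f (v i))) l (𝓤 β)) :
    Tendsto (fun i => (u i, v i)) l (𝓤 α) := by
  have hKK : map (fun i => (u i, v i)) l ≤ 𝓟 (K ×ˢ K) :=
    le_principal_iff.2 (hu.and hv)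
  intro U hU
  refine mem_of_superset ((hK.prod hK).adherence_nhdset hKK isOpen_interior ?_) interior_subset
  rintro ⟨a, b⟩ ⟨ha, hb⟩ hab
  have hab : MapClusterPt (a, b) l fun i => (u i, v i) := hab
  have hfab : f a = f b := by
    have hprod := (hf.prodMap hf (a, b) ⟨ha, hb⟩).mono_left (inf_le_inf_left _ hKK)
    exact eq_of_clusterPt_uniformity (ClusterPt.mono (hab.tendsto_comp' hprod) huv)
  obtain rfl : a = b := hinj a ha b hb (hab.continuousAt_comp continuousAt_fst)
    (hab.continuousAt_comp continuousAt_snd) hfab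
  exact refl_mem_uniformity (interior_mem_uniformity hU)

lemma comap_uniformity_inf_principal_le_of_injOn {α β : Type*} [UniformSpace α] [UniformSpace β]
    [T0Space β] {K : Set α} {f : α → β} (hK : IsCompact K) (hf : ContinuousOn f K)
    (hinj : Set.InjOn f K) : comap (Prod.map f f) (𝓤 β) ⊓ 𝓟 (K ×ˢ K) ≤ 𝓤 α := by
  have hmem : ∀ᶠ w : α × α in comap (Prod.map f f) (𝓤 β) ⊓ 𝓟 (K ×ˢ K), w ∈ K ×ˢ K :=
    mem_inf_of_right (mem_principal_self _)
  exact tendsto_uniformity_of_injOn_mapClusterPt hK hf (hmem.mono fun _ hw => hw.1)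
    (hmem.mono fun _ hw => hw.2) (fun a ha b hb _ _ hab => hinj ha hb hab)
    (tendsto_comap.mono_left inf_le_left)

lemma exists_forall_dist_lt_of_injOn {α β : Type*} [PseudoMetricSpace α] [MetricSpace β]
    {K : Set α} {f : α → β} (hK : IsCompact K) (hf : ContinuousOn f K) (hinj : Set.InjOn f K)
    {ε : ℝ} (hε : 0 < ε) :
    ∃ δ > 0, ∀ a ∈ K, ∀ b ∈ K, dist (f a) (f b) < δ → dist a b < ε := by
  obtain ⟨δ, hδ, hsub⟩ :=
    ((Metric.uniformity_basis_dist.comap (Prod.map f f)).inf_principal (K ×ˢ K)).mem_iff.1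
      (comap_uniformity_inf_principal_le_of_injOn hK hf hinj (Metric.dist_mem_uniformity hε))
  exact ⟨δ, hδ, fun a ha b hb hab => hsub (a := (a, b)) ⟨hab, ha, hb⟩⟩

end Compactness

lemma tendsto_atTop_of_isClosedEmbedding {α β : Type*} [LinearOrder α] [TopologicalSpace α]
    [NoMaxOrder α] [ClosedIciTopology α] [LinearOrder β] [TopologicalSpace β] [OrderBot β]
    [CompactIccSpace β] {f : α → β} (hf : IsClosedEmbedding f) : Tendsto f atTop atTop :=
  (hf.tendsto_cocompact.mono_left atTop_le_cocompact).mono_right cocompact_le_atTop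

section LimitSet

variable {X Y : Type*} [MetricSpace X] [MetricSpace Y] {π : X → ℝ≥0 → X} {σ : Y → ℝ≥0 → Y}
  {h : X → Y} {x z : X}

lemma mem_limitSet_iff_mapClusterPt : z ∈ limitSet π x ↔ MapClusterPt z atTop (π x) := by
  constructor
  · rintro ⟨t, ht, hz⟩
    exact .of_comp ht hz.mapClusterPt
  · intro hz
    obtain ⟨t, hz, ht⟩ := hz.exists_seq_tendsto
    exact ⟨t, ht, hz⟩

lemma isClosed_limitSet : IsClosed (limitSet π x) := by
  simpa only [← mapClusterPt_def, ← mem_limitSet_iff_mapClusterPt, Set.ofPred_mem_eq] using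
    isClosed_setOfPred_clusterPt (f := map (π x) atTop)

lemma limitSet_subset_closure_range : limitSet π x ⊆ closure (Set.range (π x)) := by
  rintro z ⟨t, -, hz⟩
  exact mem_closure_of_tendsto hz (.of_forall fun n => Set.mem_range_self (t n))

lemma isCompact_limitSet (hcpt : IsCompact (closure (Set.range (π x)))) :
    IsCompact (limitSet π x) :=
  hcpt.of_isClosed_subset isClosed_limitSet limitSet_subset_closure_range

lemma IsSDS.mapsTo_limitSet (hπ : IsSDS π) (s : ℝ≥0) :
    Set.MapsTo (π · s) (limitSet π x) (limitSet π x) := by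
  rintro z ⟨t, ht, hz⟩
  refine ⟨fun n => t n + s, tendsto_atTop_mono (fun _ => le_self_add) ht, ?_⟩
  have hcont : Continuous (π · s) := hπ.1.comp (.prodMk_left s)
  simpa only [Function.comp_def, hπ.2.2] using (hcont.tendsto z).comp hz

lemma mapsTo_limitSet_of_semiconj (hh : Continuous h) (hhom : ∀ t, h (π x t) = σ (h x) t) :
    Set.MapsTo h (limitSet π x) (limitSet σ (h x)) := by
  rintro z ⟨t, ht, hz⟩
  exact ⟨t, ht, by simpa only [Function.comp_def, hhom] using (hh.tendsto z).comp hz⟩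

lemma limitSet_subset_image_of_semiconj (hh : Continuous h) (hhom : ∀ t, h (π x t) = σ (h x) t)
    (hcpt : IsCompact (closure (Set.range (π x)))) :
    limitSet σ (h x) ⊆ h '' limitSet π x := by
  rintro p ⟨t, ht, hp⟩
  obtain ⟨q, -, φ, hφ, hq⟩ :=
    hcpt.tendsto_subseq fun n => subset_closure (Set.mem_range_self (t n))
  have hhq : Tendsto (fun n => σ (h x) (t (φ n))) atTop (𝓝 (h q)) := by
    simpa only [Function.comp_def, hhom] using (hh.tendsto q).comp hq
  exact ⟨q, ⟨t ∘ φ, ht.comp hφ.tendsto_atTop, hq⟩,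
    tendsto_nhds_unique hhq (hp.comp hφ.tendsto_atTop)⟩

lemma limitSet_subset_of_tendsto_dist (g : ℝ≥0 ≃ₜ ℝ≥0)
    (hg : Tendsto (fun t => dist (π x t) (π z (g t))) atTop (𝓝 0)) :
    limitSet π z ⊆ limitSet π x := by
  rintro q ⟨t, ht, hq⟩
  have hgt : Tendsto (fun n => g.symm (t n)) atTop atTop :=
    (tendsto_atTop_of_isClosedEmbedding g.symm.isClosedEmbedding).comp ht
  refine ⟨_, hgt, (tendsto_iff_of_dist (hg.comp hgt)).2 ?_⟩
  simpa only [Function.comp_def, Homeomorph.apply_symm_apply] using hq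

lemma tendsto_dist_of_injOn_limitSet {u : ℝ≥0 → X}
    (hcpt : IsCompact (closure (Set.range (π x)))) (hh : ContinuousOn h (closure (Set.range (π x))))
    (hinj : Set.InjOn h (limitSet π x)) (hu : ∀ t, u t ∈ limitSet π x)
    (hdist : Tendsto (fun t => dist (h (π x t)) (h (u t))) atTop (𝓝 0)) :
    Tendsto (fun t => dist (π x t) (u t)) atTop (𝓝 0) := by
  rw [← tendsto_uniformity_iff_dist_tendsto_zero (f := fun t => (_, _))] at hdist ⊢
  refine tendsto_uniformity_of_injOn_mapClusterPt hcpt hh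
    (.of_forall fun t => subset_closure (Set.mem_range_self t))
    (.of_forall fun t => limitSet_subset_closure_range (hu t)) (fun a _ b _ ha hb => ?_) hdist
  exact hinj (mem_limitSet_iff_mapClusterPt.2 ha)
    (isClosed_limitSet.mem_of_mapClusterPt hb (.of_forall hu))

end LimitSet

section AlmostPer

variable {X Y : Type*} [MetricSpace X] [MetricSpace Y] {π : X → ℝ≥0 → X} {σ : Y → ℝ≥0 → Y}
  {h : X → Y} {x : X}

lemma AlmostPer.mem_limitSet (hx : AlmostPer π x) (hπ : IsSDS π) : x ∈ limitSet π x := by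
  rw [mem_limitSet_iff_mapClusterPt, Metric.nhds_basis_ball.mapClusterPt_iff_frequently]
  intro ε hε
  obtain ⟨T, -, hT⟩ := hx ε hε
  refine frequently_atTop.2 fun α => ?_
  obtain ⟨τ, hατ, -, -, hτ⟩ := hT α
  exact ⟨τ, hατ, by simpa only [Metric.mem_ball, zero_add, hπ.2.1] using hτ 0⟩

lemma AlmostPer.of_injOn {K : Set X} (hK : IsCompact K) (hh : ContinuousOn h K)
    (hinj : Set.InjOn h K) (hhom : ∀ t, h (π x t) = σ (h x) t) (hxK : ∀ t, π x t ∈ K)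
    (hx : AlmostPer σ (h x)) : AlmostPer π x := by
  intro ε hε
  obtain ⟨δ, hδ, hclose⟩ := exists_forall_dist_lt_of_injOn hK hh hinj hε
  obtain ⟨T, hT, hper⟩ := hx δ hδ
  refine ⟨T, hT, fun α => ?_⟩
  obtain ⟨τ, hατ, hτT, hτ, hdist⟩ := hper α
  exact ⟨τ, hατ, hτT, hτ, fun t => hclose _ (hxK _) _ (hxK _) (by simpa only [hhom] using hdist t)⟩

end AlmostPer

theorem stmt_16_general {X Y : Type*} [MetricSpace X] [MetricSpace Y]
    {π : X → ℝ≥0 → X} {σ : Y → ℝ≥0 → Y} (hπ : IsSDS π) (hσ : IsSDS σ)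
    {h : X → Y} (hcont : Continuous h) (hhom : ∀ z t, h (π z t) = σ (h z) t)
    {x : X} (hx : AsympAP σ (h x)) (hcpt : IsCompact (closure (Set.range (π x))))
    (hinj : Set.InjOn h (limitSet π x)) : AsympAP π x := by
  obtain ⟨p, hp, g, hg0, hg⟩ := hx
  have hpL : p ∈ limitSet σ (h x) := limitSet_subset_of_tendsto_dist g hg (hp.mem_limitSet hσ)
  obtain ⟨q, hq, rfl⟩ := limitSet_subset_image_of_semiconj hcont (hhom x) hcpt hpL
  have horbit : ∀ t, π q t ∈ limitSet π x := fun t => hπ.mapsTo_limitSet t hq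
  have hqper : AlmostPer π q :=
    hp.of_injOn (isCompact_limitSet hcpt) hcont.continuousOn hinj (hhom q) horbit
  refine ⟨q, hqper, g, hg0, ?_⟩
  exact tendsto_dist_of_injOn_limitSet hcpt hcont.continuousOn hinj (fun t => horbit (g t))
    (by simpa only [hhom] using hg)

theorem stmt_16 {X Y : Type*} [MetricSpace X] [MetricSpace Y] [CompleteSpace Y]
    (π : X → ℝ≥0 → X) (σ : Y → ℝ≥0 → Y) (hπ : IsSDS π) (hσ : IsSDS σ)
    (h : X → Y) (hcont : Continuous h)
    (hhom : ∀ z : X, ∀ t : ℝ≥0, h (π z t) = σ (h z) t)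
    (y : Y) (hy : AsympAP σ y)
    (x : X) (hxy : h x = y)
    (hcpt : IsCompact (closure (Set.range (π x))))
    (huniq : ∀ q ∈ limitSet σ y, ∃! p : X, h p = q) :
    AsympAP π x := by
  subst hxy
  exact stmt_16_general hπ hσ hcont hhom hy hcpt fun a _ b hb hab =>
    (huniq _ (mapsTo_limitSet_of_semiconj hcont (hhom x) hb)).unique hab rfl
end
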